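/- Let A be a commutative unital C*-algebra and let B be a unital operator algebra with isometric involution that is symmetric as a Banach *-algebra. Then the Banach *-algebra A ⊗̂ B is symmetric. -/

import Mathlib

open scoped TensorProduct
open Pointwise

universe u

noncomputable section

/-- A C⋆-norm on a complex `*`-algebra.  On a matrix algebra over a C⋆-algebra such a
norm is unique, namely the canonical C⋆-norm. -/
structure IsCStarNorm {M : Type*} [NonUnitalRing M] [StarRing M] [Module ℂ M]
    (N : M → ℝ) : Prop where
  add_le : ∀ x y, N (x + y) ≤ N x + N y
  smul_eq : ∀ (c : ℂ) (x : M), N (c • x) = ‖c‖ * N x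
  eq_zero_of : ∀ x, N x = 0 → x = 0
  mul_le : ∀ x y, N (x * y) ≤ N x * N y
  star_mul_self : ∀ x, N (star x * x) = N x * N x

/-- The operator space projective tensor norm `‖·‖_∧` on the algebraic tensor product
`A ⊗ B`, relative to given families of matrix norms on `A` and `B`:
`‖u‖_∧ = inf { ‖α‖ ‖v‖ ‖w‖ ‖β‖ : u = α (v ⊗ w) β }` where `v ∈ M_p(A)`, `w ∈ M_q(B)`,
`α ∈ M_{1,pq}(ℂ)` and `β ∈ M_{pq,1}(ℂ)` (row and column vectors carrying the Euclidean
norm, which is their norm as scalar matrices). -/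
noncomputable def osProjNorm {A B : Type u}
    [AddCommGroup A] [Module ℂ A] [AddCommGroup B] [Module ℂ B]
    (NA : ∀ p : ℕ, Matrix (Fin p) (Fin p) A → ℝ)
    (NB : ∀ q : ℕ, Matrix (Fin q) (Fin q) B → ℝ) (u : A ⊗[ℂ] B) : ℝ :=
  sInf { r : ℝ | ∃ (p q : ℕ) (α : Fin p × Fin q → ℂ) (v : Matrix (Fin p) (Fin p) A)
      (w : Matrix (Fin q) (Fin q) B) (β : Fin p × Fin q → ℂ),
      u = ∑ ik : Fin p × Fin q, ∑ jl : Fin p × Fin q,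
            (α ik * β jl) • (v ik.1 jl.1 ⊗ₜ[ℂ] w ik.2 jl.2) ∧
      r = Real.sqrt (∑ ik, ‖α ik‖ ^ 2) * NA p v * NB q w *
            Real.sqrt (∑ jl, ‖β jl‖ ^ 2) }

/-- `X` is a completion of the algebraic tensor product `A ⊗ B` with respect to the
norm `ν`, via the (necessarily isometric) dense embedding `ι`, and the multiplication and
involution of `X` are the canonical ones induced from `A` and `B`.  Applied with
`ν = osProjNorm NA NB` (for the canonical matrix C⋆-norms `NA`, `NB`) this characterizes
the Banach `*`-algebra `A ⊗̂ B` (the operator space projective tensor product) up to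
isometric `*`-isomorphism; applied with `ν = bsProjNorm` it characterizes the Banach
space projective tensor product `A ⊗_γ B`. -/
structure IsTensorCompletion {A B : Type u} [NonUnitalRing A] [StarRing A] [Module ℂ A]
    [NonUnitalRing B] [StarRing B] [Module ℂ B] (ν : A ⊗[ℂ] B → ℝ)
    (X : Type u) [NonUnitalNormedRing X] [StarRing X] [NormedSpace ℂ X] [CompleteSpace X]
    (ι : A ⊗[ℂ] B →ₗ[ℂ] X) : Prop where
  norm_eq : ∀ u, ‖ι u‖ = ν u
  dense : DenseRange ι
  mul_tmul : ∀ (a c : A) (b d : B),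
    ι (a ⊗ₜ[ℂ] b) * ι (c ⊗ₜ[ℂ] d) = ι ((a * c) ⊗ₜ[ℂ] (b * d))
  star_tmul : ∀ (a : A) (b : B), star (ι (a ⊗ₜ[ℂ] b)) = ι (star a ⊗ₜ[ℂ] star b)

/-- The product ideal `S ⊗̂ T`: the closure in `X` (a completion of `A ⊗ B`) of the span of
elementary tensors `a ⊗ b` with `a ∈ S`, `b ∈ T`. -/
def tensorIdeal {A B : Type u} [NonUnitalRing A] [StarRing A] [Module ℂ A]
    [NonUnitalRing B] [StarRing B] [Module ℂ B]
    {X : Type u} [NonUnitalNormedRing X] [StarRing X] [NormedSpace ℂ X] [CompleteSpace X]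
    (ι : A ⊗[ℂ] B →ₗ[ℂ] X) (S : Set A) (T : Set B) : Set X :=
  closure (ι '' (Submodule.span ℂ (Set.image2 (fun a b => a ⊗ₜ[ℂ] b) S T)))

/-- A closed prime (two-sided) ideal of a Banach algebra: a proper closed two-sided ideal `K`
such that whenever the product of two closed two-sided ideals is contained in `K`, one of them
is contained in `K`. -/
def IsClosedPrimeIdeal {Y : Type u} [NonUnitalNormedRing Y] (K : TwoSidedIdeal Y) : Prop :=
  IsClosed (K : Set Y) ∧ (K : Set Y) ≠ Set.univ ∧
    ∀ I J : TwoSidedIdeal Y, IsClosed (I : Set Y) → IsClosed (J : Set Y) →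
      (∀ x ∈ I, ∀ y ∈ J, x * y ∈ K) → (I : Set Y) ⊆ (K : Set Y) ∨ (J : Set Y) ⊆ (K : Set Y)

/-- An irreducible continuous `*`-representation of a Banach `*`-algebra `Y` on a complex
Hilbert space. -/
structure IrreducibleRepOn (Y : Type u)
    [NonUnitalNormedRing Y] [StarRing Y] [NormedSpace ℂ Y] where
  H : Type u
  [normH : NormedAddCommGroup H]
  [ipsH : InnerProductSpace ℂ H]
  [csH : CompleteSpace H]
  π : Y →⋆ₙₐ[ℂ] (H →L[ℂ] H)
  continuous : Continuous π
  nonzero : ∃ y, π y ≠ 0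
  irreducible : ∀ S : Submodule ℂ H, IsClosed (S : Set H) →
    (∀ y : Y, ∀ v ∈ S, π y v ∈ S) → S = ⊥ ∨ S = ⊤

/-- A primitive ideal: the kernel of an irreducible `*`-representation. -/
def IsPrimitiveIdeal {Y : Type u} [NonUnitalNormedRing Y] [StarRing Y] [NormedSpace ℂ Y]
    (K : TwoSidedIdeal Y) : Prop :=
  ∃ ρ : IrreducibleRepOn Y, ∀ y, y ∈ K ↔ ρ.π y = 0

/-- A subset `K` of a ring is modular (as an ideal) if there is a relative unit `e`
with `x * e - x ∈ K` and `e * x - x ∈ K` for every `x`. -/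
def IsModularIdealSet {Y : Type u} [NonUnitalRing Y] (K : Set Y) : Prop :=
  ∃ e : Y, ∀ x : Y, x * e - x ∈ K ∧ e * x - x ∈ K

/-- A maximal modular (two-sided) ideal: a modular ideal which is proper and maximal among
proper two-sided ideals. -/
def IsMaximalModularIdeal {Y : Type u} [NonUnitalRing Y] (K : TwoSidedIdeal Y) : Prop :=
  IsModularIdealSet (K : Set Y) ∧ (K : Set Y) ≠ Set.univ ∧
    ∀ L : TwoSidedIdeal Y, (K : Set Y) ⊆ (L : Set Y) →
      (L : Set Y) = (K : Set Y) ∨ (L : Set Y) = Set.univ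

/-- The operator norm of a `p × p` matrix of bounded operators on a Hilbert space `H`,
viewed as an operator on the `ℓ²`-direct sum `H ⊕ ⋯ ⊕ H`. -/
noncomputable def opMatrixNorm {H : Type u} [NormedAddCommGroup H] [InnerProductSpace ℂ H]
    {p : ℕ} (T : Matrix (Fin p) (Fin p) (H →L[ℂ] H)) : ℝ :=
  sSup { r : ℝ | ∃ x : Fin p → H, (∑ i, ‖x i‖ ^ 2) ≤ 1 ∧
      r = Real.sqrt (∑ i, ‖∑ j, (T i j) (x j)‖ ^ 2) }

/-- An operator algebra structure on a Banach algebra `Y`: a bicontinuous algebra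
homomorphism of `Y` into the bounded operators on some Hilbert space. -/
structure OperatorAlgebraEmbedding (Y : Type u) [NonUnitalNormedRing Y] [NormedSpace ℂ Y] where
  H : Type u
  [normH : NormedAddCommGroup H]
  [ipsH : InnerProductSpace ℂ H]
  [csH : CompleteSpace H]
  ρ : Y →ₙₐ[ℂ] (H →L[ℂ] H)
  c : ℝ
  C : ℝ
  c_pos : 0 < c
  lower : ∀ y, c * ‖y‖ ≤ ‖ρ y‖
  upper : ∀ y, ‖ρ y‖ ≤ C * ‖y‖

/-- The matrix norms on `Y` induced by an operator algebra embedding, giving `Y` its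
operator space structure: the norm of `v ∈ M_p(Y)` is the operator norm of the matrix
of operators obtained by applying the embedding entrywise. -/
noncomputable def OperatorAlgebraEmbedding.matrixNorm {Y : Type u}
    [NonUnitalNormedRing Y] [NormedSpace ℂ Y] (e : OperatorAlgebraEmbedding Y)
    (p : ℕ) (v : Matrix (Fin p) (Fin p) Y) : ℝ :=
  letI := e.normH; letI := e.ipsH
  opMatrixNorm (v.map e.ρ)

/-- The Banach space projective tensor norm `‖·‖_γ` on the algebraic tensor product. -/
noncomputable def bsProjNorm {A B : Type u} [NonUnitalNormedRing A] [NormedSpace ℂ A]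
    [NonUnitalNormedRing B] [NormedSpace ℂ B] (u : A ⊗[ℂ] B) : ℝ :=
  sInf { r : ℝ | ∃ (n : ℕ) (a : Fin n → A) (b : Fin n → B),
      u = ∑ i, a i ⊗ₜ[ℂ] b i ∧ r = ∑ i, ‖a i‖ * ‖b i‖ }

/-- A C⋆-algebra `A` is subhomogeneous if there is `n : ℕ` bounding the (finite)
dimensions of all its irreducible `*`-representations. -/
def IsSubhomogeneous (A : Type u) [NonUnitalCStarAlgebra A] : Prop :=
  ∃ n : ℕ, ∀ ρ : IrreducibleRepOn A,
    letI := ρ.normH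
    letI := ρ.ipsH
    FiniteDimensional ℂ ρ.H ∧ Module.finrank ℂ ρ.H ≤ n

/-!
A self-adjoint `x` in the completion `X` of `A ⊗ B` has real spectrum as soon as `x - μ` is left
invertible for every nonreal `μ`: the adjoint of a left inverse of `x - μ̄` is a right inverse of
`x - μ`. An element which is not left invertible lies in a maximal left ideal `L`. By Schur's lemma
the central subalgebra `A ⊗ 1` acts on `X ⧸ L` through a character `φ`, so modulo `L` every `y`
agrees with `1 ⊗ R y`, where `R : X → B` extends the slice map `φ ⊗ id`. Slices are bounded because
the C⋆-norm on `M_p(A)` is unique and `φ` is contractive on it. It therefore suffices to make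
`R x - μ` left invertible in the symmetric algebra `B`.

Since the involution of `X` may be discontinuous, `R x` need not be self-adjoint. But `R` and
`y ↦ (R y⋆)⋆` are surjective homomorphisms which agree on a dense subalgebra, so, as in Johnson's
uniqueness of norm theorem, `R x - (R x)⋆` lies in the Jacobson radical of `B`, and perturbing by an
element of the radical does not affect invertibility.
-/

/-! ### Uniqueness of the C⋆-norm -/

namespace IsCStarNorm

section

variable {M : Type*} [NonUnitalRing M] [StarRing M] [Module ℂ M] {N : M → ℝ}

theorem map_zero (hN : IsCStarNorm N) : N 0 = 0 := by
  simpa using hN.smul_eq 0 0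

theorem nonneg (hN : IsCStarNorm N) (x : M) : 0 ≤ N x := by
  have h := hN.add_le x ((-1 : ℂ) • x)
  rw [hN.smul_eq, norm_neg, norm_one, one_mul, neg_one_smul, add_neg_cancel, hN.map_zero] at h
  linarith

theorem comp_starAlgEquiv {M' : Type*} [NonUnitalRing M'] [StarRing M'] [Module ℂ M']
    (hN : IsCStarNorm N) (e : M' ≃⋆ₐ[ℂ] M) : IsCStarNorm (N ∘ e) where
  add_le x y := by simpa using hN.add_le (e x) (e y)
  smul_eq c x := by simpa using hN.smul_eq c (e x)
  eq_zero_of x hx := by simpa using hN.eq_zero_of _ hx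
  mul_le x y := by simpa using hN.mul_le (e x) (e y)
  star_mul_self x := by simpa [map_star] using hN.star_mul_self (e x)

end

section

variable {M : Type*} [CStarAlgebra M] {N : M → ℝ}

theorem map_le_one_of_mem_unitary (hN : IsCStarNorm N) {u : M} (hu : u ∈ unitary M) :
    N u ≤ 1 := by
  have hone := hN.star_mul_self 1
  have hself := hN.star_mul_self u
  rw [star_one, mul_one] at hone
  rw [Unitary.star_mul_self_of_mem hu] at hself
  have hle : N 1 ≤ 1 := by nlinarith [hN.nonneg 1]
  nlinarith [hN.nonneg u]

/- A self-adjoint contraction is the average of two unitaries. -/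
theorem map_le_one_of_isSelfAdjoint (hN : IsCStarNorm N) {a : M} (ha : IsSelfAdjoint a)
    (hnorm : ‖a‖ ≤ 1) : N a ≤ 1 := by
  let _ := CStarAlgebra.spectralOrder M
  have := CStarAlgebra.spectralOrderedRing M
  set u : unitary M := selfAdjoint.unitarySelfAddISMul ⟨a, ha⟩ hnorm
  have hau : a = (2⁻¹ : ℂ) • ((u : M) + star (u : M)) := by
    have := congrArg Subtype.val (selfAdjoint.realPart_unitarySelfAddISMul ⟨a, ha⟩ hnorm)
    rw [realPart_apply_coe, ← Complex.coe_smul] at this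
    simpa [u] using this.symm
  have h₁ := hN.map_le_one_of_mem_unitary u.2
  have h₂ := hN.map_le_one_of_mem_unitary (star u).2
  have h₃ := hN.add_le (u : M) (star (u : M))
  rw [hau, hN.smul_eq, show ‖(2⁻¹ : ℂ)‖ = 2⁻¹ by norm_num]
  rw [Unitary.coe_star] at h₂
  linarith

theorem le_norm_of_isSelfAdjoint (hN : IsCStarNorm N) {a : M} (ha : IsSelfAdjoint a) :
    N a ≤ ‖a‖ := by
  rcases eq_or_ne a 0 with rfl | ha₀
  · rw [hN.map_zero, norm_zero]
  have hpos : 0 < ‖a‖ := norm_pos_iff.2 ha₀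
  have hle : N (((‖a‖⁻¹ : ℝ) : ℂ) • a) ≤ 1 := by
    refine hN.map_le_one_of_isSelfAdjoint (IsSelfAdjoint.smul (Complex.conj_ofReal _) ha) ?_
    simp [norm_smul, hpos.ne']
  rwa [hN.smul_eq, Complex.norm_real, norm_inv, norm_norm, inv_mul_le_iff₀ hpos, mul_one] at hle

theorem le_norm (hN : IsCStarNorm N) (a : M) : N a ≤ ‖a‖ := by
  have h := hN.le_norm_of_isSelfAdjoint (IsSelfAdjoint.star_mul_self a)
  rw [hN.star_mul_self, CStarRing.norm_star_mul_self] at h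
  exact (mul_self_le_mul_self_iff (hN.nonneg a) (norm_nonneg a)).2 h

/- If `N h < r`, the function `t ↦ t / max (t²) (r²)` of `h` almost inverts `h` on the range of
`(|h| - r)₊`, which forces `(|h| - r)₊ = 0`, that is, `‖h‖ ≤ r`. -/
theorem norm_le_of_isSelfAdjoint (hN : IsCStarNorm N) {h : M} (hh : IsSelfAdjoint h) :
    ‖h‖ ≤ N h := by
  refine le_of_forall_gt_imp_ge_of_dense fun r hr ↦ ?_
  have hr₀ : 0 < r := (hN.nonneg h).trans_lt hr
  have hmax (t : ℝ) : 0 < max (t ^ 2) (r ^ 2) := lt_max_of_lt_right (by positivity)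
  let f (t : ℝ) : ℝ := max (|t| - r) 0
  let g (t : ℝ) : ℝ := t / max (t ^ 2) (r ^ 2)
  have hf : Continuous f := by fun_prop
  have hg : Continuous g := continuous_id.div (by fun_prop) fun t ↦ (hmax t).ne'
  have hgr : N (cfc g h) ≤ r⁻¹ := by
    refine (hN.le_norm _).trans (norm_cfc_le (by positivity) fun t _ ↦ ?_)
    rw [Real.norm_eq_abs, abs_div, abs_of_pos (hmax t), div_le_iff₀ (hmax t), inv_mul_eq_div,
      le_div_iff₀ hr₀]
    rcases le_total |t| r with h | h
    · nlinarith [le_max_right (t ^ 2) (r ^ 2)]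
    · nlinarith [le_max_left (t ^ 2) (r ^ 2), sq_abs t, abs_nonneg t]
  have hprod : h * cfc g h * cfc f h = cfc f h := by
    nth_rw 1 [← cfc_id' ℝ h]
    rw [← cfc_mul _ g h (by fun_prop) hg.continuousOn,
      ← cfc_mul (fun t ↦ t * g t) f h (by fun_prop) hf.continuousOn]
    refine cfc_congr fun t _ ↦ ?_
    rcases le_total |t| r with h | h
    · simp [f, h]
    · have ht : t ≠ 0 := abs_pos.1 (hr₀.trans_le h)
      have : max (t ^ 2) (r ^ 2) = t ^ 2 := max_eq_left (by rw [← sq_abs t]; gcongr)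
      simp only [g, this]
      field_simp
  have hf₀ : cfc f h = 0 := by
    refine hN.eq_zero_of _ ?_
    have hle : N (cfc f h) ≤ N h * r⁻¹ * N (cfc f h) := by
      calc N (cfc f h) = N (h * cfc g h * cfc f h) := by rw [hprod]
        _ ≤ N h * N (cfc g h) * N (cfc f h) := (hN.mul_le _ _).trans
            (mul_le_mul_of_nonneg_right (hN.mul_le _ _) (hN.nonneg _))
        _ ≤ N h * r⁻¹ * N (cfc f h) := by gcongr <;> exact hN.nonneg _
    have hlt : N h * r⁻¹ < 1 := (mul_inv_lt_iff₀ hr₀).2 (by simpa using hr)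
    nlinarith [hN.nonneg (cfc f h)]
  have hfspec : Set.EqOn f (fun _ ↦ 0) (spectrum ℝ h) := by
    rw [← cfc_eq_cfc_iff_eqOn (ha := hh) (hf := hf.continuousOn), hf₀, cfc_const_zero]
  rw [← cfc_id' ℝ h]
  refine norm_cfc_le hr₀.le fun t ht ↦ ?_
  simpa [f] using hfspec ht

theorem eq_norm (hN : IsCStarNorm N) (a : M) : N a = ‖a‖ := by
  refine le_antisymm (hN.le_norm a) ?_
  have h := hN.norm_le_of_isSelfAdjoint (IsSelfAdjoint.star_mul_self a)
  rw [hN.star_mul_self, CStarRing.norm_star_mul_self] at h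
  exact (mul_self_le_mul_self_iff (norm_nonneg a) (hN.nonneg a)).2 h

end

end IsCStarNorm

section

open scoped Matrix.Norms.L2Operator

theorem norm_matrix_map_le_of_isCStarNorm {A n : Type*} [CStarAlgebra A] [Fintype n]
    [DecidableEq n] {N : Matrix n n A → ℝ} (hN : IsCStarNorm N) (φ : A →ₐ[ℂ] ℂ)
    (v : Matrix n n A) : ‖v.map φ‖ ≤ N v := by
  let _ := CStarAlgebra.spectralOrder A
  have := CStarAlgebra.spectralOrderedRing A
  let e : CStarMatrix n n A ≃⋆ₐ[ℂ] Matrix n n A := CStarMatrix.ofMatrixStarAlgEquiv.symm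
  let Φ : CStarMatrix n n A →⋆ₐ[ℂ] Matrix n n ℂ :=
    { φ.mapMatrix.comp (e : CStarMatrix n n A →ₐ[ℂ] Matrix n n A) with
      map_star' w := by ext i j; simp [map_star e, map_star φ] }
  have hnorm := (hN.comp_starAlgEquiv e).eq_norm (e.symm v)
  rw [Function.comp_apply, e.apply_symm_apply] at hnorm
  simpa [hnorm, Φ] using NonUnitalStarAlgHom.norm_apply_le Φ (e.symm v)

end

/-! ### Maximal left ideals of Banach algebras -/

theorem bijective_smul_of_isSimpleModule {R M : Type*} [Ring R] [AddCommGroup M] [Module R M]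
    [IsSimpleModule R M] {c : R} (hc : ∀ r, Commute c r) {m : M} (hm : c • m ≠ 0) :
    Function.Bijective (c • · : M → M) := by
  let f : M →ₗ[R] M :=
    { toFun := (c • ·)
      map_add' := smul_add c
      map_smul' r x := by simp [smul_smul, (hc r).eq] }
  exact f.bijective_or_eq_zero.resolve_right fun hf ↦ hm (DFunLike.congr_fun hf m)

/- Schur's lemma for the simple module `X ⧸ L`, on which multiplication by `c` is a bounded
operator and therefore has nonempty spectrum. -/
theorem exists_sub_algebraMap_mem_of_isMaximal {X : Type*} [NormedRing X] [NormedAlgebra ℂ X]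
    [CompleteSpace X] {L : Ideal X} (hL : L.IsMaximal) {c : X} (hc : ∀ x, Commute c x) :
    ∃ μ : ℂ, c - algebraMap ℂ X μ ∈ L := by
  have hclosed : IsClosed (L : Set X) := hL.isClosed
  have : IsSimpleModule X (X ⧸ L) := isSimpleModule_iff_isCoatom.2 hL.out
  have : Nontrivial (X ⧸ L) := IsSimpleModule.nontrivial X (X ⧸ L)
  let T : X ⧸ L →L[ℂ] X ⧸ L :=
    { toFun := (c • ·)
      map_add' := smul_add c
      map_smul' μ q := (smul_comm μ c q).symm
      cont := continuous_const_smul c }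
  obtain ⟨μ, hμ⟩ := spectrum.nonempty T
  refine ⟨μ, by_contra fun hmem ↦ hμ ?_⟩
  have hbij : Function.Bijective ((c - algebraMap ℂ X μ) • · : X ⧸ L → X ⧸ L) := by
    refine bijective_smul_of_isSimpleModule
      (fun x ↦ (hc x).sub_left (Algebra.commutes μ x)) (m := Submodule.Quotient.mk 1) ?_
    rwa [← Submodule.Quotient.mk_smul, smul_eq_mul, mul_one, ne_eq, Submodule.Quotient.mk_eq_zero]
  rw [spectrum.mem_resolventSet_iff, ← IsUnit.neg_iff, neg_sub,
    ContinuousLinearMap.isUnit_iff_bijective]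
  convert hbij using 2 with q
  simp [T, sub_smul]

theorem exists_algHom_ker_eq {A : Type*} [CommRing A] [Algebra ℂ A] {I : Ideal A} (hI : I ≠ ⊤)
    (h : ∀ a, ∃ μ : ℂ, a - algebraMap ℂ A μ ∈ I) : ∃ φ : A →ₐ[ℂ] ℂ, RingHom.ker φ = I := by
  have : Nontrivial (A ⧸ I) := Ideal.Quotient.nontrivial_iff.2 hI
  have hbij : Function.Bijective (Algebra.ofId ℂ (A ⧸ I)) := by
    refine ⟨(algebraMap ℂ (A ⧸ I)).injective, fun q ↦ ?_⟩
    obtain ⟨a, rfl⟩ := Ideal.Quotient.mk_surjective q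
    obtain ⟨μ, hμ⟩ := h a
    exact ⟨μ, (Ideal.Quotient.eq.2 hμ).symm⟩
  refine ⟨(AlgEquiv.ofBijective _ hbij).symm.toAlgHom.comp (Ideal.Quotient.mkₐ ℂ I), ?_⟩
  ext a
  simp [RingHom.mem_ker, Ideal.Quotient.eq_zero_iff_mem]

theorem exists_algHom_sub_algebraMap_mem {X A : Type*} [NormedRing X] [NormedAlgebra ℂ X]
    [CompleteSpace X] [CommRing A] [Algebra ℂ A] {L : Ideal X} (hL : L.IsMaximal) {j : A →ₐ[ℂ] X}
    (hj : ∀ a x, Commute (j a) x) :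
    ∃ φ : A →ₐ[ℂ] ℂ, ∀ a, j a - algebraMap ℂ X (φ a) ∈ L := by
  obtain ⟨φ, hφ⟩ := exists_algHom_ker_eq (I := L.comap j) (Ideal.comap_ne_top j hL.ne_top)
    fun a ↦ by simpa [Ideal.mem_comap] using exists_sub_algebraMap_mem_of_isMaximal hL (hj a)
  refine ⟨φ, fun a ↦ ?_⟩
  have hker : a - algebraMap ℂ A (φ a) ∈ RingHom.ker φ := by simp [RingHom.mem_ker]
  simpa [hφ, Ideal.mem_comap] using hker

/-! ### Elements approximated by images of null sequences -/

section

open Filter Topology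

open Complex.HadamardThreeLines in
theorem sq_norm_apply_one_le_of_norm_le_on_spheres {E : Type*} [NormedAddCommGroup E]
    [NormedSpace ℂ E] {f : ℂ → E} (hf : Differentiable ℂ f) {R M₁ M₂ : ℝ} (hR : 1 < R)
    (h₁ : ∀ z, ‖z‖ = R → ‖f z‖ ≤ M₁) (h₂ : ∀ z, ‖z‖ = R⁻¹ → ‖f z‖ ≤ M₂) :
    ‖f 1‖ ^ 2 ≤ M₁ * M₂ := by
  have hR₀ : 0 < R := one_pos.trans hR
  have hL : 0 < Real.log R := Real.log_pos hR
  have hnorm_exp (s : ℂ) : ‖Complex.exp s‖ = Real.exp s.re := Complex.norm_exp s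
  have hM₁ : 0 ≤ M₁ := (norm_nonneg _).trans (h₁ R (by simp [abs_of_pos hR₀]))
  have hM₂ : 0 ≤ M₂ := (norm_nonneg _).trans (h₂ (R⁻¹ : ℝ) (by simp [abs_of_pos hR₀]))
  have hbdd : BddAbove (norm ∘ (f ∘ Complex.exp) ''
      verticalClosedStrip (-Real.log R) (Real.log R)) := by
    refine ((isCompact_closedBall (0 : ℂ) R).image hf.continuous.norm).bddAbove.mono ?_
    rintro _ ⟨s, hs, rfl⟩
    refine ⟨Complex.exp s, ?_, rfl⟩
    rw [mem_closedBall_zero_iff, hnorm_exp, ← Real.le_log_iff_exp_le hR₀]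
    exact hs.2
  have hinterp := norm_le_interp_of_mem_verticalClosedStrip' (f := f ∘ Complex.exp)
    (z := 0) (a := M₂) (b := M₁) (l := -Real.log R) (u := Real.log R) (by linarith)
    ⟨by simpa using hL.le, by simpa using hL.le⟩
    (hf.comp Complex.differentiable_exp).diffContOnCl hbdd
    (fun s (hs : s.re = _) ↦ h₂ _ (by rw [hnorm_exp, hs, Real.exp_neg, Real.exp_log hR₀]))
    (fun s (hs : s.re = _) ↦ h₁ _ (by rw [hnorm_exp, hs, Real.exp_log hR₀]))
  have hhalf : ((0 : ℂ).re - -Real.log R) / (Real.log R - -Real.log R) = 1 / 2 := by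
    simp only [Complex.zero_re]
    field_simp
    norm_num
  rw [hhalf, show (1 - 1 / 2 : ℝ) = 1 / 2 by norm_num, ← Real.sqrt_eq_rpow,
    ← Real.sqrt_eq_rpow, Function.comp_apply, Complex.exp_zero] at hinterp
  calc ‖f 1‖ ^ 2 ≤ (√M₂ * √M₁) ^ 2 := by gcongr
    _ = M₁ * M₂ := by rw [mul_pow, Real.sq_sqrt hM₂, Real.sq_sqrt hM₁, mul_comm]

theorem isUnit_one_sub_of_norm_pow_lt_one {B : Type*} [NormedRing B] [CompleteSpace B] {b : B}
    {n : ℕ} (hb : ‖b ^ n‖ < 1) : IsUnit (1 - b) := by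
  have hcomm : Commute (1 - b) (∑ i ∈ Finset.range n, b ^ i) :=
    Commute.sum_right _ _ _ fun i _ ↦ (Commute.one_left _).sub_left (Commute.self_pow b i)
  refine (hcomm.isUnit_mul_iff.1 ?_).1
  rw [mul_neg_geom_sum]
  exact isUnit_one_sub_of_norm_lt_one hb

theorem spectralRadius_algHom_apply_lt {X B : Type*} [NormedRing X] [NormedAlgebra ℂ X]
    [CompleteSpace X] [Ring B] [Algebra ℂ B] (T : X →ₐ[ℂ] B) {x : X} {M : ℝ}
    (hx : ‖x‖ * ‖(1 : X)‖ < M) : spectralRadius ℂ (T x) < ENNReal.ofReal M := by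
  have hM : 0 < M := (by positivity : 0 ≤ ‖x‖ * ‖(1 : X)‖).trans_lt hx
  refine lt_of_le_of_lt (iSup₂_le fun z hz ↦ ?_) ((ENNReal.ofReal_lt_ofReal_iff hM).2 hx)
  rw [← ENNReal.ofReal_coe_nnreal]
  exact ENNReal.ofReal_le_ofReal
    (spectrum.norm_le_norm_mul_of_mem (AlgHom.spectrum_apply_subset T x hz))

section

variable {B : Type*} [NormedRing B] [NormedAlgebra ℂ B] [CompleteSpace B]

theorem exists_norm_pow_two_pow_lt {b : B} {M : ℝ}
    (hb : spectralRadius ℂ b < ENNReal.ofReal M) : ∃ k : ℕ, ‖b ^ 2 ^ k‖ < M ^ 2 ^ k := by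
  have hM : 0 < M := ENNReal.ofReal_pos.1 (bot_le.trans_lt hb)
  have hpow : Tendsto (fun k : ℕ ↦ 2 ^ k) atTop atTop :=
    tendsto_pow_atTop_atTop_of_one_lt one_lt_two
  obtain ⟨k, hk⟩ := (hpow.eventually <| (spectrum.pow_norm_pow_one_div_tendsto_nhds_spectralRadius
    b).eventually_lt_const hb).exists
  rw [ENNReal.ofReal_lt_ofReal_iff hM, one_div,
    Real.rpow_inv_lt_iff_of_pos (norm_nonneg _) hM.le (by positivity), Real.rpow_natCast] at hk
  exact ⟨k, hk⟩

/- As in Dini's theorem: the conditions `‖(f z) ^ 2 ^ k‖ < M ^ 2 ^ k` are open in `z` and become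
weaker as `k` grows, by submultiplicativity of the norm. -/
theorem exists_norm_pow_two_pow_lt_of_isCompact {Z : Type*} [TopologicalSpace Z] {S : Set Z}
    (hS : IsCompact S) {f : Z → B} (hf : Continuous f) {M : ℝ}
    (hM : ∀ z ∈ S, spectralRadius ℂ (f z) < ENNReal.ofReal M) :
    ∃ k : ℕ, ∀ z ∈ S, ‖f z ^ 2 ^ k‖ < M ^ 2 ^ k := by
  let U (k : ℕ) : Set Z := {z | ‖f z ^ 2 ^ k‖ < M ^ 2 ^ k}
  have hU : Monotone U := by
    refine monotone_nat_of_le_succ fun k z (hz : ‖f z ^ 2 ^ k‖ < M ^ 2 ^ k) ↦ ?_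
    change ‖f z ^ 2 ^ (k + 1)‖ < M ^ 2 ^ (k + 1)
    rw [pow_succ 2, pow_mul, pow_mul]
    calc ‖(f z ^ 2 ^ k) ^ 2‖ ≤ ‖f z ^ 2 ^ k‖ ^ 2 := norm_pow_le' _ two_pos
      _ < (M ^ 2 ^ k) ^ 2 := by gcongr
  obtain ⟨k, hk⟩ := hS.elim_directed_cover U (fun k ↦ isOpen_lt (by fun_prop) (by fun_prop))
    (fun z hz ↦ Set.mem_iUnion.2 (exists_norm_pow_two_pow_lt (hM z hz))) hU.directed_le
  exact ⟨k, hk⟩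

theorem isUnit_one_sub_apply_one_of_differentiable {f : ℂ → B} (hf : Differentiable ℂ f)
    {R M m : ℝ} (hR : 1 < R) (hMm : M * m < 1)
    (hM : ∀ z, ‖z‖ = R → spectralRadius ℂ (f z) < ENNReal.ofReal M)
    (hm : ∀ z, ‖z‖ = R⁻¹ → ‖f z‖ ≤ m) : IsUnit (1 - f 1) := by
  have hR₀ : 0 < R := one_pos.trans hR
  have hM₀ : 0 < M := ENNReal.ofReal_pos.1 (bot_le.trans_lt (hM R (by simp [abs_of_pos hR₀])))
  have hm₀ : 0 ≤ m := (norm_nonneg _).trans (hm (R⁻¹ : ℝ) (by simp [abs_of_pos hR₀]))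
  obtain ⟨k, hk⟩ := exists_norm_pow_two_pow_lt_of_isCompact (isCompact_sphere (0 : ℂ) R)
    hf.continuous fun z hz ↦ hM z (mem_sphere_zero_iff_norm.1 hz)
  have hsq : ‖f 1 ^ 2 ^ k‖ ^ 2 ≤ M ^ 2 ^ k * m ^ 2 ^ k :=
    sq_norm_apply_one_le_of_norm_le_on_spheres (hf.fun_pow _) hR
      (fun z hz ↦ (hk z (mem_sphere_zero_iff_norm.2 hz)).le) fun z hz ↦
      (norm_pow_le' _ (by positivity)).trans (by gcongr; exact hm z hz)
  have hlt : ‖f 1 ^ 2 ^ k‖ ^ 2 < 1 := hsq.trans_lt <| by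
    rw [← mul_pow]
    exact pow_lt_one₀ (by positivity) hMm (by positivity)
  exact isUnit_one_sub_of_norm_pow_lt_one
    ((pow_lt_one_iff_of_nonneg (norm_nonneg _) two_ne_zero).1 hlt)

variable {X : Type*} [NormedRing X] [NormedAlgebra ℂ X] [CompleteSpace X]

/- Ransford's three circles argument. On the circle `|z| = R` the spectral radius of
`T (z • s n + (a - s n))` is controlled in `X`, uniformly in `R` once `n` is large; on `|z| = R⁻¹`
its norm is `O(R⁻¹)`. Hence `T a`, the value at `z = 1`, is quasi-nilpotent enough. -/
theorem isUnit_one_sub_algHom_apply_of_tendsto (T : X →ₐ[ℂ] B) {a : X} {s : ℕ → X}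
    (hs : Tendsto s atTop (𝓝 0)) (hTs : Tendsto (fun n ↦ T (s n)) atTop (𝓝 (T a))) :
    IsUnit (1 - T a) := by
  set M := (‖a‖ + 1) * ‖(1 : X)‖ + 1
  set K := ‖T a‖ + 2
  obtain ⟨R, hRK, hR⟩ : ∃ R : ℝ, M * (K * R⁻¹) < 1 ∧ 1 < R := by
    have hlim : Tendsto (fun R : ℝ ↦ M * (K * R⁻¹)) atTop (𝓝 (M * (K * 0))) :=
      (tendsto_inv_atTop_zero.const_mul K).const_mul M
    rw [mul_zero, mul_zero] at hlim
    exact ((hlim.eventually_lt_const one_pos).and (eventually_gt_atTop 1)).exists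
  have hsmall : ∀ᶠ n in atTop, (R + 1) * ‖s n‖ < 1 := by
    have hlim := hs.norm.const_mul (R + 1)
    rw [norm_zero, mul_zero] at hlim
    exact hlim.eventually_lt_const one_pos
  have hclose : ∀ᶠ n in atTop, ‖T a - T (s n)‖ < R⁻¹ := by
    have hlim := (hTs.const_sub (T a)).norm
    rw [sub_self, norm_zero] at hlim
    exact hlim.eventually_lt_const (by positivity)
  obtain ⟨n, hn, hn'⟩ := (hsmall.and hclose).exists
  have hTsn : ‖T (s n)‖ ≤ ‖T a‖ + 1 := by
    have : R⁻¹ ≤ 1 := inv_le_one_of_one_le₀ hR.le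
    linarith [norm_le_norm_add_norm_sub (T a) (T (s n))]
  have hunit := isUnit_one_sub_apply_one_of_differentiable
    (f := fun z : ℂ ↦ z • T (s n) + (T a - T (s n))) (by fun_prop) hR hRK ?_ ?_
  · simpa using hunit
  · intro z hz
    have hlt : ‖z • s n + (a - s n)‖ ≤ ‖a‖ + 1 := by
      calc ‖z • s n + (a - s n)‖ ≤ ‖z • s n‖ + (‖a‖ + ‖s n‖) :=
            (norm_add_le _ _).trans (by gcongr; exact norm_sub_le _ _)
        _ = ‖a‖ + (R + 1) * ‖s n‖ := by rw [norm_smul, hz]; ring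
        _ ≤ ‖a‖ + 1 := by gcongr
    have := spectralRadius_algHom_apply_lt T (x := z • s n + (a - s n)) (M := M)
      (lt_add_of_le_of_pos (by gcongr) one_pos)
    simpa using this
  · intro z hz
    calc ‖z • T (s n) + (T a - T (s n))‖ ≤ ‖z • T (s n)‖ + ‖T a - T (s n)‖ := norm_add_le _ _
      _ ≤ R⁻¹ * (‖T a‖ + 1) + R⁻¹ := by rw [norm_smul, hz]; gcongr
      _ = K * R⁻¹ := by ring

/- The limits of `T (s n)` along null sequences `s` form a left ideal, so all left multiples of
`d` satisfy the hypothesis of `isUnit_one_sub_algHom_apply_of_tendsto`. -/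
theorem mem_jacobson_of_tendsto_algHom_apply {T : X →ₐ[ℂ] B} (hT : Function.Surjective T)
    {d : B} {s : ℕ → X} (hs : Tendsto s atTop (𝓝 0))
    (hTs : Tendsto (fun n ↦ T (s n)) atTop (𝓝 d)) : d ∈ Ring.jacobson B := by
  rw [← Ideal.jacobson_bot, Ideal.mem_jacobson_iff]
  intro y
  obtain ⟨w, hw⟩ := hT (-y)
  obtain ⟨a, ha⟩ := hT (-y * d)
  have hunit : IsUnit (1 - T a) := by
    refine isUnit_one_sub_algHom_apply_of_tendsto T (s := fun n ↦ w * s n) ?_ ?_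
    · simpa using hs.const_mul w
    · simpa [hw, ha] using hTs.const_mul (-y)
  obtain ⟨z, hz⟩ := hunit.exists_left_inv
  refine ⟨z, ?_⟩
  rw [Ideal.mem_bot, ← hz, ha]
  noncomm_ring

theorem sub_mem_jacobson_of_eqOn_dense {R σ : X →ₐ[ℂ] B} (hR : Continuous R)
    (hσ : Function.Surjective σ) {S : Set X} (hS : Dense S) (hRσ : Set.EqOn R σ S) (x : X) :
    R x - σ x ∈ Ring.jacobson B := by
  obtain ⟨y, hyS, hy⟩ := mem_closure_iff_seq_limit.1 (hS x)
  refine mem_jacobson_of_tendsto_algHom_apply hσ (s := fun n ↦ y n - x) ?_ ?_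
  · simpa using hy.sub_const x
  · simpa [hRσ (hyS _)] using ((hR.tendsto x).comp hy).sub_const (σ x)

end

theorem exists_mul_add_eq_one_of_mem_jacobson {R : Type*} [Ring R] {u d : R} (hu : IsUnit u)
    (hd : d ∈ Ring.jacobson R) : ∃ z, z * (u + d) = 1 := by
  obtain ⟨v, hv⟩ := hu.exists_left_inv
  rw [← Ideal.jacobson_bot, Ideal.mem_jacobson_iff] at hd
  obtain ⟨z, hz⟩ := hd v
  refine ⟨z * v, ?_⟩
  rw [Ideal.mem_bot, sub_eq_zero] at hz
  rw [mul_add, mul_assoc, hv, mul_one, add_comm, hz]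

/-- The algebra homomorphism `x ↦ (R x⋆)⋆`. -/
def starConj {X B : Type*} [Ring X] [Algebra ℂ X] [StarRing X] [StarModule ℂ X]
    [Ring B] [Algebra ℂ B] [StarRing B] [StarModule ℂ B] (R : X →ₐ[ℂ] B) : X →ₐ[ℂ] B where
  toFun x := star (R (star x))
  map_one' := by simp
  map_mul' := by simp
  map_zero' := by simp
  map_add' := by simp
  commutes' c := by rw [← algebraMap_star_comm, AlgHom.commutes, ← algebraMap_star_comm, star_star]

section

variable {X B : Type*} [NormedRing X] [NormedAlgebra ℂ X] [CompleteSpace X] [StarRing X]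
  [StarModule ℂ X] [NormedRing B] [NormedAlgebra ℂ B] [CompleteSpace B] [StarRing B]
  [StarModule ℂ B]

theorem sub_star_mem_jacobson_of_isSelfAdjoint {R : X →ₐ[ℂ] B} (hR : Continuous R)
    (hsurj : Function.Surjective R) {S : Set X} (hS : Dense S)
    (hstar : ∀ y ∈ S, R (star y) = star (R y)) {x : X} (hx : IsSelfAdjoint x) :
    R x - star (R x) ∈ Ring.jacobson B := by
  have hσ : Function.Surjective (starConj R) := fun b ↦ by
    obtain ⟨y, hy⟩ := hsurj (star b)
    exact ⟨star y, by simp [starConj, hy]⟩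
  simpa [starConj, hx.star_eq] using
    sub_mem_jacobson_of_eqOn_dense hR hσ hS (fun y hy ↦ by simp [starConj, hstar y hy]) x

/- `R x - μ = (ℜ (R x) - μ) + (R x - (R x)⋆) / 2`, an invertible element plus one of the
radical. -/
theorem exists_mul_algHom_apply_sub_eq_one {R : X →ₐ[ℂ] B} (hR : Continuous R)
    (hsurj : Function.Surjective R) {S : Set X} (hS : Dense S)
    (hstar : ∀ y ∈ S, R (star y) = star (R y))
    (hB : ∀ b : B, IsSelfAdjoint b → spectrum ℂ b ⊆ {z : ℂ | z.im = 0})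
    {x : X} (hx : IsSelfAdjoint x) {μ : ℂ} (hμ : μ.im ≠ 0) :
    ∃ z, z * R (x - algebraMap ℂ X μ) = 1 := by
  set h : B := (2⁻¹ : ℂ) • (R x + star (R x)) with hh
  have hunit : IsUnit (h - algebraMap ℂ B μ) := by
    have hsa : IsSelfAdjoint h :=
      IsSelfAdjoint.smul (by simp [isSelfAdjoint_iff]) (IsSelfAdjoint.add_star_self (R x))
    have hres : μ ∉ spectrum ℂ h := fun hmem ↦ hμ (hB h hsa hmem)
    exact IsUnit.sub_iff.1 (spectrum.notMem_iff.1 hres)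
  have hd : (2⁻¹ : ℂ) • (R x - star (R x)) ∈ Ring.jacobson B :=
    Submodule.smul_of_tower_mem _ _ (sub_star_mem_jacobson_of_isSelfAdjoint hR hsurj hS hstar hx)
  obtain ⟨z, hz⟩ := exists_mul_add_eq_one_of_mem_jacobson hunit hd
  refine ⟨z, ?_⟩
  rw [← hz, hh, map_sub, AlgHom.commutes]
  congr 1
  module

end

end

/-! ### Slices of tensor products -/

namespace IsTensorCompletion

variable {A B X : Type u} [Ring A] [StarRing A] [Algebra ℂ A] [Ring B] [StarRing B] [Algebra ℂ B]
  [NormedRing X] [NormedAlgebra ℂ X] [CompleteSpace X] [StarRing X] {ν : A ⊗[ℂ] B → ℝ}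
  {ι : A ⊗[ℂ] B →ₗ[ℂ] X}

/-- The embedding of `A ⊗ B` into a completion, as an algebra homomorphism. -/
def toAlgHom (hX : IsTensorCompletion ν X ι) (hone : ι (1 ⊗ₜ 1) = 1) : A ⊗[ℂ] B →ₐ[ℂ] X :=
  Algebra.TensorProduct.algHomOfLinearMapTensorProduct ι
    (fun _ _ _ _ ↦ (hX.mul_tmul _ _ _ _).symm) hone

theorem starModule [StarModule ℂ A] (hX : IsTensorCompletion ν X ι) (hone : ι (1 ⊗ₜ 1) = 1) :
    StarModule ℂ X where
  star_smul c x := by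
    have hstar : star (algebraMap ℂ X c) = algebraMap ℂ X (star c) := by
      rw [Algebra.algebraMap_eq_smul_one, Algebra.algebraMap_eq_smul_one, ← hone, ← map_smul,
        ← map_smul, TensorProduct.smul_tmul', TensorProduct.smul_tmul', hX.star_tmul, star_smul,
        star_one, star_one]
    rw [Algebra.smul_def, star_mul, hstar, ← Algebra.commutes, ← Algebra.smul_def]

theorem map_star [StarModule ℂ A] [StarModule ℂ B] (hX : IsTensorCompletion ν X ι)
    (u : A ⊗[ℂ] B) : ι (star u) = star (ι u) := by
  induction u using TensorProduct.induction_on with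
  | zero => simp
  | add u v hu hv => simp [hu, hv]
  | tmul a b => rw [TensorProduct.star_tmul, hX.star_tmul]

end IsTensorCompletion

/-- The slice map `φ ⊗ id : A ⊗ B → B` at a character `φ` of `A`. -/
def slice {A B : Type*} [Ring A] [Algebra ℂ A] [Ring B] [Algebra ℂ B] (φ : A →ₐ[ℂ] ℂ) :
    A ⊗[ℂ] B →ₐ[ℂ] B :=
  (Algebra.TensorProduct.lid ℂ B).toAlgHom.comp (Algebra.TensorProduct.map φ (AlgHom.id ℂ B))

@[simp]
theorem slice_tmul {A B : Type*} [Ring A] [Algebra ℂ A] [Ring B] [Algebra ℂ B]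
    (φ : A →ₐ[ℂ] ℂ) (a : A) (b : B) : slice φ (a ⊗ₜ[ℂ] b) = φ a • b := by
  simp [slice]

theorem slice_star {A B : Type*} [CommCStarAlgebra A] [Ring B] [StarRing B] [Algebra ℂ B]
    [StarModule ℂ B] (φ : A →ₐ[ℂ] ℂ) (u : A ⊗[ℂ] B) : slice φ (star u) = star (slice φ u) := by
  induction u using TensorProduct.induction_on with
  | zero => simp
  | add u v hu hv => simp [hu, hv]
  | tmul a b => simp [map_star]

theorem exists_algHom_extension {D X B : Type*} [Ring D] [Algebra ℂ D] [NormedRing X]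
    [NormedAlgebra ℂ X] [NormedRing B] [NormedAlgebra ℂ B] [CompleteSpace B] {j : D →ₐ[ℂ] X}
    (hj : DenseRange j) {T : D →ₐ[ℂ] B} (hT : ∃ C, ∀ u, ‖T u‖ ≤ C * ‖j u‖) :
    ∃ R : X →ₐ[ℂ] B, Continuous R ∧ ∀ u, R (j u) = T u := by
  let R : X →L[ℂ] B := T.toLinearMap.extendOfNorm j.toLinearMap
  have hR (u : D) : R (j u) = T u :=
    LinearMap.extendOfNorm_eq (e := j.toLinearMap) (f := T.toLinearMap) hj hT u
  have hone : R 1 = 1 := by simpa using hR 1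
  have hmul (x y : X) : R (x * y) = R x * R y :=
    hj.induction_on₂ (p := fun x y ↦ R (x * y) = R x * R y)
      (isClosed_eq (by fun_prop) (by fun_prop))
      (fun u v ↦ by rw [← map_mul, hR, hR, hR, map_mul]) x y
  exact ⟨AlgHom.ofLinearMap R.toLinearMap hone hmul, R.continuous, hR⟩

theorem sub_apply_one_tmul_mem_of_isMaximal {A B X : Type*} [Ring A] [Algebra ℂ A]
    [NormedRing B] [NormedAlgebra ℂ B] [NormedRing X] [NormedAlgebra ℂ X] [CompleteSpace X]
    {j : A ⊗[ℂ] B →ₐ[ℂ] X} (hj : DenseRange j)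
    (hjB : Continuous fun b : B ↦ j (1 ⊗ₜ b)) {L : Ideal X} (hL : L.IsMaximal)
    {φ : A →ₐ[ℂ] ℂ} (hφ : ∀ a, j (a ⊗ₜ 1) - algebraMap ℂ X (φ a) ∈ L) {R : X →ₐ[ℂ] B}
    (hR : Continuous R) (hRj : ∀ u, R (j u) = slice φ u) (x : X) :
    x - j (1 ⊗ₜ R x) ∈ L := by
  refine hj.induction_on (p := fun x ↦ x - j (1 ⊗ₜ R x) ∈ L) x
    (hL.isClosed.preimage (continuous_id.sub (hjB.comp hR))) fun u ↦ ?_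
  rw [hRj]
  induction u using TensorProduct.induction_on with
  | zero => simp
  | add u v hu hv =>
    simpa only [map_add, TensorProduct.tmul_add, add_sub_add_comm] using L.add_mem hu hv
  | tmul a b =>
    have hfactor : j (a ⊗ₜ b) - j (1 ⊗ₜ slice φ (a ⊗ₜ b)) =
        j (1 ⊗ₜ b) * (j (a ⊗ₜ 1) - algebraMap ℂ X (φ a)) := by
      rw [← AlgHom.commutes j, mul_sub, ← map_mul, ← map_mul, ← map_sub, ← map_sub]
      simp [Algebra.algebraMap_eq_smul_one]
    exact hfactor ▸ L.mul_mem_left _ (hφ a)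

section

variable {A B X : Type*} [CommRing A] [Algebra ℂ A] [NormedRing B] [NormedAlgebra ℂ B]
  [NormedRing X] [NormedAlgebra ℂ X] {j : A ⊗[ℂ] B →ₐ[ℂ] X}

theorem commute_apply_tmul_one (hj : DenseRange j) (a : A) (x : X) : Commute (j (a ⊗ₜ 1)) x := by
  refine hj.induction_on (p := fun x ↦ Commute (j (a ⊗ₜ 1)) x) x
    (isClosed_eq (by fun_prop) (by fun_prop)) fun u ↦ Commute.map ?_ j
  induction u using TensorProduct.induction_on with
  | zero => exact Commute.zero_right _
  | add u v hu hv => exact hu.add_right hv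
  | tmul c d => simp [commute_iff_eq, mul_comm]

/- Otherwise `x` lies in a maximal left ideal, modulo which every element of `X` agrees with one
of its slices. -/
theorem exists_mul_eq_one_of_slices [CompleteSpace X] (hj : DenseRange j)
    (hjB : Continuous fun b : B ↦ j (1 ⊗ₜ b)) {R : (A →ₐ[ℂ] ℂ) → X →ₐ[ℂ] B}
    (hR : ∀ φ, Continuous (R φ)) (hRj : ∀ φ u, R φ (j u) = slice φ u) {x : X}
    (hx : ∀ φ, ∃ z, z * R φ x = 1) : ∃ y, y * x = 1 := by
  by_contra hnot
  have hspan : Ideal.span {x} ≠ ⊤ := by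
    rwa [Ideal.ne_top_iff_one, Ideal.mem_span_singleton']
  obtain ⟨L, hL, hxL⟩ := Ideal.exists_le_maximal _ hspan
  obtain ⟨φ, hφ⟩ := exists_algHom_sub_algebraMap_mem hL
    (j := j.comp Algebra.TensorProduct.includeLeft) (commute_apply_tmul_one hj)
  obtain ⟨z, hz⟩ := hx φ
  have hslice : j (1 ⊗ₜ R φ x) ∈ L := by
    simpa using L.sub_mem (hxL (Ideal.mem_span_singleton_self x))
      (sub_apply_one_tmul_mem_of_isMaximal hj hjB hL hφ (hR φ) (hRj φ) x)
  have hmem := L.mul_mem_left (j (1 ⊗ₜ z)) hslice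
  rw [← map_mul, Algebra.TensorProduct.tmul_mul_tmul, hz, one_mul,
    ← Algebra.TensorProduct.one_def, map_one] at hmem
  exact hL.ne_top ((Ideal.eq_top_iff_one L).2 hmem)

end

/-! ### The operator space projective norm -/

section

variable {H : Type u} [NormedAddCommGroup H] [InnerProductSpace ℂ H] {p : ℕ}
  (T : Matrix (Fin p) (Fin p) (H →L[ℂ] H))

theorem bddAbove_opMatrixNorm :
    BddAbove {r : ℝ | ∃ x : Fin p → H, (∑ i, ‖x i‖ ^ 2) ≤ 1 ∧
      r = √(∑ i, ‖∑ j, T i j (x j)‖ ^ 2)} := by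
  refine ⟨√(∑ i, (∑ j, ‖T i j‖) ^ 2), ?_⟩
  rintro _ ⟨x, hx, rfl⟩
  have hx₁ (j : Fin p) : ‖x j‖ ≤ 1 := (sq_le_one_iff₀ (norm_nonneg _)).1 <|
    (Finset.single_le_sum (fun i _ ↦ sq_nonneg ‖x i‖) (Finset.mem_univ j)).trans hx
  gcongr with i
  exact norm_sum_le_of_le _ fun j _ ↦ (T i j).le_of_opNorm_le_of_le le_rfl (hx₁ j) |>.trans_eq
    (mul_one _)

theorem opMatrixNorm_nonneg : 0 ≤ opMatrixNorm T := by
  refine Real.sSup_nonneg ?_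
  rintro _ ⟨x, -, rfl⟩
  positivity

theorem sum_sq_norm_sum_apply_le (x : Fin p → H) :
    ∑ i, ‖∑ j, T i j (x j)‖ ^ 2 ≤ opMatrixNorm T ^ 2 * ∑ j, ‖x j‖ ^ 2 := by
  rcases (Finset.sum_nonneg fun j _ ↦ sq_nonneg ‖x j‖).eq_or_lt with hzero | hpos
  · have hx (j : Fin p) : x j = 0 := by
      simpa using (Finset.sum_eq_zero_iff_of_nonneg fun i _ ↦ sq_nonneg ‖x i‖).1 hzero.symm j
        (Finset.mem_univ j)
    simp [hx]
  set c : ℂ := (((√(∑ j, ‖x j‖ ^ 2))⁻¹ : ℝ) : ℂ) with hc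
  have hcsq : ‖c‖ ^ 2 = (∑ j, ‖x j‖ ^ 2)⁻¹ := by
    rw [hc, Complex.norm_real, Real.norm_of_nonneg (by positivity), inv_pow, Real.sq_sqrt hpos.le]
  have hunit : √(∑ i, ‖∑ j, T i j (c • x j)‖ ^ 2) ≤ opMatrixNorm T := by
    refine le_csSup (bddAbove_opMatrixNorm T) ⟨fun j ↦ c • x j, ?_, rfl⟩
    simp_rw [norm_smul, mul_pow]
    rw [← Finset.mul_sum, hcsq, inv_mul_cancel₀ hpos.ne']
  rw [Real.sqrt_le_left (opMatrixNorm_nonneg T)] at hunit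
  simp_rw [map_smul, ← Finset.smul_sum, norm_smul, mul_pow] at hunit
  rwa [← Finset.mul_sum, hcsq, inv_mul_le_iff₀ hpos, mul_comm] at hunit

theorem opMatrixNorm_fin_one_le (S : Matrix (Fin 1) (Fin 1) (H →L[ℂ] H)) :
    opMatrixNorm S ≤ ‖S 0 0‖ := by
  refine Real.sSup_le ?_ (norm_nonneg _)
  rintro _ ⟨x, hx, rfl⟩
  rw [Fin.sum_univ_one, sq_le_one_iff₀ (norm_nonneg _)] at hx
  rw [Fin.sum_univ_one, Fin.sum_univ_one, Real.sqrt_sq (norm_nonneg _)]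
  exact ((S 0 0).le_of_opNorm_le_of_le le_rfl hx).trans_eq (mul_one _)

theorem sum_sq_norm_inner_sum_smul_apply_le {m : Type*} [Fintype m] (β : m × Fin p → ℂ)
    (g h : H) :
    ∑ jk : m × Fin p, ‖inner ℂ g (∑ l, β (jk.1, l) • T jk.2 l h)‖ ^ 2 ≤
      (‖g‖ * opMatrixNorm T * ‖h‖) ^ 2 * ∑ jl, ‖β jl‖ ^ 2 := by
  rw [Fintype.sum_prod_type, Fintype.sum_prod_type, Finset.mul_sum]
  refine Finset.sum_le_sum fun j _ ↦ ?_
  calc ∑ k, ‖inner ℂ g (∑ l, β (j, l) • T k l h)‖ ^ 2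
      ≤ ∑ k, (‖g‖ * ‖∑ l, T k l (β (j, l) • h)‖) ^ 2 := by
        simp_rw [map_smul]
        gcongr
        exact norm_inner_le_norm _ _
    _ = ‖g‖ ^ 2 * ∑ k, ‖∑ l, T k l (β (j, l) • h)‖ ^ 2 := by simp_rw [mul_pow, Finset.mul_sum]
    _ ≤ ‖g‖ ^ 2 * (opMatrixNorm T ^ 2 * ∑ l, ‖β (j, l) • h‖ ^ 2) := by
        gcongr
        exact sum_sq_norm_sum_apply_le T _
    _ = (‖g‖ * opMatrixNorm T * ‖h‖) ^ 2 * ∑ l, ‖β (j, l)‖ ^ 2 := by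
        simp_rw [norm_smul, mul_pow, ← Finset.sum_mul]
        ring

end

section

open scoped Matrix.Norms.L2Operator

theorem sum_sq_norm_mulVec_le {m n : Type*} [Fintype m] [Fintype n] [DecidableEq n]
    (V : Matrix m n ℂ) (z : n → ℂ) : ∑ i, ‖V.mulVec z i‖ ^ 2 ≤ ‖V‖ ^ 2 * ∑ j, ‖z j‖ ^ 2 := by
  have h := pow_le_pow_left₀ (norm_nonneg _) (V.l2_opNorm_mulVec (WithLp.toLp 2 z)) 2
  rwa [mul_pow, EuclideanSpace.norm_sq_eq, EuclideanSpace.norm_sq_eq] at h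

theorem norm_sum_mul_mulVec_le {m n k : Type*} [Fintype m] [Fintype n] [DecidableEq n] [Fintype k]
    (V : Matrix m n ℂ) (α : m × k → ℂ) (z : n × k → ℂ) :
    ‖∑ ik, α ik * V.mulVec (fun j ↦ z (j, ik.2)) ik.1‖ ≤
      √(∑ ik, ‖α ik‖ ^ 2) * (‖V‖ * √(∑ jk, ‖z jk‖ ^ 2)) := by
  have hV : ∑ ik : m × k, ‖V.mulVec (fun j ↦ z (j, ik.2)) ik.1‖ ^ 2 ≤
      ‖V‖ ^ 2 * ∑ jk, ‖z jk‖ ^ 2 := by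
    rw [Fintype.sum_prod_type_right, Fintype.sum_prod_type_right, Finset.mul_sum]
    exact Finset.sum_le_sum fun l _ ↦ sum_sq_norm_mulVec_le V fun j ↦ z (j, l)
  calc ‖∑ ik, α ik * V.mulVec (fun j ↦ z (j, ik.2)) ik.1‖
      ≤ ∑ ik, ‖α ik‖ * ‖V.mulVec (fun j ↦ z (j, ik.2)) ik.1‖ :=
        norm_sum_le_of_le _ fun _ _ ↦ norm_mul_le _ _
    _ ≤ √(∑ ik, ‖α ik‖ ^ 2) * √(∑ ik : m × k, ‖V.mulVec (fun j ↦ z (j, ik.2)) ik.1‖ ^ 2) :=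
        Real.sum_mul_le_sqrt_mul_sqrt _ _ _
    _ ≤ √(∑ ik, ‖α ik‖ ^ 2) * √(‖V‖ ^ 2 * ∑ jk, ‖z jk‖ ^ 2) := by gcongr
    _ = √(∑ ik, ‖α ik‖ ^ 2) * (‖V‖ * √(∑ jk, ‖z jk‖ ^ 2)) := by
        rw [Real.sqrt_mul (sq_nonneg _), Real.sqrt_sq (norm_nonneg _)]

theorem norm_sum_smul_smul_le {H : Type u} [NormedAddCommGroup H] [InnerProductSpace ℂ H]
    {m n : Type*} [Fintype m] [Fintype n] [DecidableEq n] {q : ℕ} (V : Matrix m n ℂ)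
    (T : Matrix (Fin q) (Fin q) (H →L[ℂ] H)) (α : m × Fin q → ℂ) (β : n × Fin q → ℂ) :
    ‖∑ ik, ∑ jl, (α ik * β jl) • V ik.1 jl.1 • T ik.2 jl.2‖ ≤
      √(∑ ik, ‖α ik‖ ^ 2) * ‖V‖ * opMatrixNorm T * √(∑ jl, ‖β jl‖ ^ 2) := by
  have hT := opMatrixNorm_nonneg T
  refine ContinuousLinearMap.opNorm_le_of_re_inner_le (by positivity) fun h g hh hg ↦ ?_
  let z (jk : n × Fin q) : ℂ := inner ℂ g (∑ l, β (jk.1, l) • T jk.2 l h)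
  have hinner : inner ℂ g ((∑ ik, ∑ jl, (α ik * β jl) • V ik.1 jl.1 • T ik.2 jl.2) h) =
      ∑ ik, α ik * V.mulVec (fun j ↦ z (j, ik.2)) ik.1 := by
    simp only [z, Matrix.mulVec, dotProduct, sum_apply,
      smul_apply, inner_sum, inner_smul_right, Fintype.sum_prod_type,
      Finset.mul_sum]
    simp only [mul_assoc, mul_left_comm]
  have hz : √(∑ jk, ‖z jk‖ ^ 2) ≤ opMatrixNorm T * √(∑ jl, ‖β jl‖ ^ 2) := by
    have hsq := sum_sq_norm_inner_sum_smul_apply_le T β g h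
    rw [hg, hh, one_mul, mul_one] at hsq
    rw [← Real.sqrt_sq hT, ← Real.sqrt_mul (sq_nonneg _)]
    exact Real.sqrt_le_sqrt hsq
  calc _ ≤ ‖inner ℂ g ((∑ ik, ∑ jl, (α ik * β jl) • V ik.1 jl.1 • T ik.2 jl.2) h)‖ := by
        rw [norm_inner_symm]
        exact RCLike.re_le_norm _
    _ ≤ √(∑ ik, ‖α ik‖ ^ 2) * (‖V‖ * √(∑ jk, ‖z jk‖ ^ 2)) :=
        hinner ▸ norm_sum_mul_mulVec_le V α z
    _ ≤ √(∑ ik, ‖α ik‖ ^ 2) * (‖V‖ * (opMatrixNorm T * √(∑ jl, ‖β jl‖ ^ 2))) := by gcongr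
    _ = √(∑ ik, ‖α ik‖ ^ 2) * ‖V‖ * opMatrixNorm T * √(∑ jl, ‖β jl‖ ^ 2) := by ring

end

theorem OperatorAlgebraEmbedding.matrixNorm_nonneg {B : Type u} [NonUnitalNormedRing B]
    [NormedSpace ℂ B] (e : OperatorAlgebraEmbedding B) (q : ℕ) (w : Matrix (Fin q) (Fin q) B) :
    0 ≤ e.matrixNorm q w :=
  let _ := e.normH
  let _ := e.ipsH
  opMatrixNorm_nonneg _

theorem OperatorAlgebraEmbedding.matrixNorm_one_le {B : Type u} [NonUnitalNormedRing B]
    [NormedSpace ℂ B] (e : OperatorAlgebraEmbedding B) (b : B) :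
    e.matrixNorm 1 (fun _ _ ↦ b) ≤ e.C * ‖b‖ :=
  let _ := e.normH
  let _ := e.ipsH
  (opMatrixNorm_fin_one_le _).trans (e.upper b)

section

variable {A B : Type u} [AddCommGroup A] [Module ℂ A] [AddCommGroup B] [Module ℂ B]

theorem exists_eq_sum_smul_tmul (u : A ⊗[ℂ] B) :
    ∃ (n : ℕ) (α : Fin n × Fin n → ℂ) (v : Matrix (Fin n) (Fin n) A)
      (w : Matrix (Fin n) (Fin n) B) (β : Fin n × Fin n → ℂ),
      u = ∑ ik, ∑ jl, (α ik * β jl) • (v ik.1 jl.1 ⊗ₜ[ℂ] w ik.2 jl.2) := by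
  obtain ⟨S, rfl⟩ := TensorProduct.exists_finset u
  let a (i : Fin S.card) : A := (S.equivFin.symm i : A × B).1
  let b (i : Fin S.card) : B := (S.equivFin.symm i : A × B).2
  let δ (ik : Fin S.card × Fin S.card) : ℂ := if ik.1 = ik.2 then 1 else 0
  refine ⟨S.card, δ, Matrix.diagonal a, Matrix.diagonal b, δ, ?_⟩
  calc ∑ x ∈ S, x.1 ⊗ₜ[ℂ] x.2 = ∑ i, a i ⊗ₜ[ℂ] b i := by
        rw [← Finset.sum_coe_sort S, ← Equiv.sum_comp S.equivFin.symm]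
    _ = _ := by
        simp [Fintype.sum_prod_type, δ, Matrix.diagonal_apply, TensorProduct.ite_tmul,
          TensorProduct.tmul_ite, ite_smul]

variable {NA : ∀ p : ℕ, Matrix (Fin p) (Fin p) A → ℝ}
  {NB : ∀ q : ℕ, Matrix (Fin q) (Fin q) B → ℝ}

theorem le_osProjNorm {u : A ⊗[ℂ] B} {r : ℝ}
    (h : ∀ (p q : ℕ) (α : Fin p × Fin q → ℂ) (v : Matrix (Fin p) (Fin p) A)
      (w : Matrix (Fin q) (Fin q) B) (β : Fin p × Fin q → ℂ),
      u = ∑ ik, ∑ jl, (α ik * β jl) • (v ik.1 jl.1 ⊗ₜ[ℂ] w ik.2 jl.2) →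
      r ≤ √(∑ ik, ‖α ik‖ ^ 2) * NA p v * NB q w * √(∑ jl, ‖β jl‖ ^ 2)) :
    r ≤ osProjNorm NA NB u := by
  obtain ⟨n, α, v, w, β, hu⟩ := exists_eq_sum_smul_tmul u
  refine le_csInf ⟨_, n, n, α, v, w, β, hu, rfl⟩ ?_
  rintro _ ⟨p, q, α, v, w, β, hu, rfl⟩
  exact h p q α v w β hu

theorem osProjNorm_tmul_le (hNA : ∀ p v, 0 ≤ NA p v) (hNB : ∀ q w, 0 ≤ NB q w) (a : A) (b : B) :
    osProjNorm NA NB (a ⊗ₜ b) ≤ NA 1 (fun _ _ ↦ a) * NB 1 (fun _ _ ↦ b) := by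
  refine csInf_le ⟨0, ?_⟩ ⟨1, 1, 1, fun _ _ ↦ a, fun _ _ ↦ b, 1, by simp, by simp⟩
  rintro _ ⟨p, q, α, v, w, β, -, rfl⟩
  have := hNA p v
  have := hNB q w
  positivity

end

open scoped Matrix.Norms.L2Operator in
theorem norm_slice_le_osProjNorm {A B : Type u} [CommCStarAlgebra A] [NormedRing B]
    [NormedAlgebra ℂ B] (e : OperatorAlgebraEmbedding B)
    {NA : ∀ p : ℕ, Matrix (Fin p) (Fin p) A → ℝ} (hNA : ∀ p, IsCStarNorm (NA p))
    (φ : A →ₐ[ℂ] ℂ) (u : A ⊗[ℂ] B) :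
    ‖slice φ u‖ ≤ e.c⁻¹ * osProjNorm NA e.matrixNorm u := by
  let _ := e.normH
  let _ := e.ipsH
  rw [le_inv_mul_iff₀ e.c_pos]
  refine (e.lower _).trans (le_osProjNorm fun p q α v w β hu ↦ ?_)
  have hρ : e.ρ (slice φ u) =
      ∑ ik, ∑ jl, (α ik * β jl) • v.map φ ik.1 jl.1 • w.map e.ρ ik.2 jl.2 := by
    simp [hu]
  have hw := e.matrixNorm_nonneg q w
  calc ‖e.ρ (slice φ u)‖
      ≤ √(∑ ik, ‖α ik‖ ^ 2) * ‖v.map φ‖ * e.matrixNorm q w * √(∑ jl, ‖β jl‖ ^ 2) :=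
        hρ ▸ norm_sum_smul_smul_le (v.map φ) (w.map e.ρ) α β
    _ ≤ √(∑ ik, ‖α ik‖ ^ 2) * NA p v * e.matrixNorm q w * √(∑ jl, ‖β jl‖ ^ 2) := by
        gcongr
        exact norm_matrix_map_le_of_isCStarNorm (hNA p) φ v

/-! ### Symmetry -/

theorem spectrum_subset_of_forall_exists_mul_sub_eq_one {X : Type*} [Ring X] [Algebra ℂ X]
    [StarRing X] [StarModule ℂ X] {x : X} (hx : IsSelfAdjoint x)
    (h : ∀ μ : ℂ, μ.im ≠ 0 → ∃ y, y * (x - algebraMap ℂ X μ) = 1) :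
    spectrum ℂ x ⊆ {z : ℂ | z.im = 0} := by
  refine fun μ hμ ↦ by_contra fun him ↦ hμ ?_
  obtain ⟨y, hy⟩ := h μ him
  obtain ⟨y', hy'⟩ := h (star μ) (by simpa using him)
  have hright : (x - algebraMap ℂ X μ) * star y' = 1 := by
    simpa [hx.star_eq, ← algebraMap_star_comm] using congrArg star hy'
  rw [spectrum.mem_resolventSet_iff, IsUnit.sub_iff]
  exact isUnit_iff_exists_and_exists.2 ⟨⟨_, hright⟩, ⟨y, hy⟩⟩

theorem spectrum_subset_of_slices {A B X : Type*} [CommCStarAlgebra A] [NormedRing B]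
    [NormedAlgebra ℂ B] [CompleteSpace B] [StarRing B] [StarModule ℂ B] [NormedRing X]
    [NormedAlgebra ℂ X] [CompleteSpace X] [StarRing X] [StarModule ℂ X]
    {j : A ⊗[ℂ] B →ₐ[ℂ] X} (hj : DenseRange j) (hjB : Continuous fun b : B ↦ j (1 ⊗ₜ b))
    (hstar : ∀ u, j (star u) = star (j u))
    (hslice : ∀ φ : A →ₐ[ℂ] ℂ, ∃ C, ∀ u, ‖slice φ u‖ ≤ C * ‖j u‖)
    (hB : ∀ b : B, IsSelfAdjoint b → spectrum ℂ b ⊆ {z : ℂ | z.im = 0})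
    {x : X} (hx : IsSelfAdjoint x) : spectrum ℂ x ⊆ {z : ℂ | z.im = 0} := by
  choose R hR hRj using fun φ ↦ exists_algHom_extension hj (hslice φ)
  refine spectrum_subset_of_forall_exists_mul_sub_eq_one hx fun μ hμ ↦
    exists_mul_eq_one_of_slices hj hjB hR hRj fun φ ↦ ?_
  have hsurj : Function.Surjective (R φ) := fun b ↦ ⟨j (1 ⊗ₜ b), by simp [hRj]⟩
  refine exists_mul_algHom_apply_sub_eq_one (hR φ) hsurj hj ?_ hB hx hμ
  rintro _ ⟨u, rfl⟩
  rw [← hstar, hRj, hRj, slice_star]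

theorem osProjTensor_symmetric_of_comm_and_symmetric_general {A B X : Type u}
    [CommCStarAlgebra A]
    [NormedRing B] [NormedAlgebra ℂ B] [CompleteSpace B] [StarRing B] [StarModule ℂ B]
    (eB : OperatorAlgebraEmbedding B)
    (hBsymm : ∀ b : B, IsSelfAdjoint b → spectrum ℂ b ⊆ {z : ℂ | z.im = 0})
    [NormedRing X] [NormedAlgebra ℂ X] [CompleteSpace X] [StarRing X]
    (NA : ∀ p : ℕ, Matrix (Fin p) (Fin p) A → ℝ) (hNA : ∀ p, IsCStarNorm (NA p))
    (ι : A ⊗[ℂ] B →ₗ[ℂ] X)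
    (hX : IsTensorCompletion (osProjNorm NA eB.matrixNorm) X ι)
    (hone : ι ((1 : A) ⊗ₜ[ℂ] (1 : B)) = 1) :
    ∀ x : X, IsSelfAdjoint x → spectrum ℂ x ⊆ {z : ℂ | z.im = 0} := by
  have := hX.starModule hone
  have hbound (b : B) : ‖ι (1 ⊗ₜ b)‖ ≤ NA 1 (fun _ _ ↦ 1) * eB.C * ‖b‖ := by
    have hNA₁ := (hNA 1).nonneg (fun _ _ ↦ 1)
    rw [hX.norm_eq, mul_assoc]
    refine (osProjNorm_tmul_le (fun p ↦ (hNA p).nonneg) eB.matrixNorm_nonneg 1 b).trans ?_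
    gcongr
    exact eB.matrixNorm_one_le b
  have hcont : Continuous fun b : B ↦ ι (1 ⊗ₜ b) :=
    AddMonoidHomClass.continuous_of_bound (ι ∘ₗ TensorProduct.mk ℂ A B 1) _ hbound
  refine fun x hx ↦ spectrum_subset_of_slices (j := hX.toAlgHom hone) hX.dense hcont hX.map_star
    (fun φ ↦ ⟨eB.c⁻¹, fun u ↦ ?_⟩) hBsymm hx
  exact (norm_slice_le_osProjNorm eB hNA φ u).trans_eq (by rw [← hX.norm_eq]; rfl)

/-- Let `A` be a commutative unital C⋆-algebra and let `B` be a unital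
operator algebra with an isometric involution which is symmetric as a Banach `*`-algebra.
Then the Banach `*`-algebra `A ⊗̂ B` (realized as the unital tensor completion `X` for the
operator space projective norm built from the canonical matrix C⋆-norms on `A` and the
operator space structure of `B`) is symmetric: every self-adjoint element has real
spectrum. -/
theorem osProjTensor_symmetric_of_comm_and_symmetric {A B X : Type u}
    [CommCStarAlgebra A]
    [NormedRing B] [NormedAlgebra ℂ B] [CompleteSpace B] [StarRing B] [StarModule ℂ B]
    (hBstar : ∀ b : B, ‖star b‖ = ‖b‖)
    (eB : OperatorAlgebraEmbedding B)
    (hBsymm : ∀ b : B, IsSelfAdjoint b → spectrum ℂ b ⊆ {z : ℂ | z.im = 0})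
    [NormedRing X] [NormedAlgebra ℂ X] [CompleteSpace X] [StarRing X]
    (NA : ∀ p : ℕ, Matrix (Fin p) (Fin p) A → ℝ) (hNA : ∀ p, IsCStarNorm (NA p))
    (ι : A ⊗[ℂ] B →ₗ[ℂ] X)
    (hX : IsTensorCompletion (osProjNorm NA eB.matrixNorm) X ι)
    (hone : ι ((1 : A) ⊗ₜ[ℂ] (1 : B)) = 1) :
    ∀ x : X, IsSelfAdjoint x → spectrum ℂ x ⊆ {z : ℂ | z.im = 0} :=
  osProjTensor_symmetric_of_comm_and_symmetric_general eB hBsymm NA hNA ι hX hone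

end
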